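/- Every small hereditary class of ordered graphs has bounded twin-width: if C is a class of finite ordered graphs that is closed under taking induced ordered subgraphs, and there exist constants c > 0 and K > 0 such that for every n the number of isomorphism classes of n-vertex ordered graphs in C is at most K·c^n, then there exists a natural number d such that every graph in C has twin-width at most d. -/

import Mathlib

/-- `P` is a partition of the type `V`: its parts are nonempty and every element of
`V` lies in exactly one part. -/
def IsPartitionOf {V : Type*} (P : Set (Set V)) : Prop :=
  (∀ p ∈ P, p.Nonempty) ∧ ∀ v : V, ∃! p, p ∈ P ∧ v ∈ p

/-- Two distinct parts `X` and `Y` are joined by a red edge when some but not all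
pairs `(x, y)` with `x ∈ X` and `y ∈ Y` are adjacent in `G`. -/
def RedAdj {V : Type*} (G : SimpleGraph V) (X Y : Set V) : Prop :=
  X ≠ Y ∧ (∃ x ∈ X, ∃ y ∈ Y, G.Adj x y) ∧ (∃ x ∈ X, ∃ y ∈ Y, ¬ G.Adj x y)

/-- In the partition `P`, every part is joined by red edges to at most `d` other
parts. -/
def RedDegLE {V : Type*} (G : SimpleGraph V) (P : Set (Set V)) (d : ℕ) : Prop :=
  ∀ X ∈ P, {Y | Y ∈ P ∧ RedAdj G X Y}.ncard ≤ d

/-- `G` has twin-width at most `d`: there is a contraction sequence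
`P_n, P_(n−1), …, P_1` (where `n` is the number of vertices of `G`), i.e. a sequence
of partitions of the vertex set where `P_n` is the partition into singletons, `P_1`
has a single part, and each `P_i` is obtained from `P_(i+1)` by merging two of its
parts, in which every part of every partition of the sequence is joined by red
edges to at most `d` other parts. -/
def HasTwinWidthLE {V : Type*} [Fintype V] (G : SimpleGraph V) (d : ℕ) : Prop :=
  ∃ P : ℕ → Set (Set V),
    (P (Fintype.card V) = {s : Set V | ∃ v : V, s = {v}}) ∧
    (0 < Fintype.card V → P 1 = {Set.univ}) ∧
    (∀ i : ℕ, 1 ≤ i → i < Fintype.card V →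
      ∃ X Y : Set V, X ∈ P (i + 1) ∧ Y ∈ P (i + 1) ∧ X ≠ Y ∧
        P i = (P (i + 1) \ {X, Y}) ∪ {X ∪ Y}) ∧
    (∀ i : ℕ, 1 ≤ i → i ≤ Fintype.card V →
      IsPartitionOf (P i) ∧ RedDegLE G (P i) d)


section TwwProof
open scoped Classical

/-- Trace of `x` on `Q`. -/
noncomputable def tr {V : Type*} (G : SimpleGraph V) (Q : Finset V) (x : V) : Finset V :=
  Q.filter (fun v => G.Adj x v)

/-- Number of distinct traces of elements of `p` on `Q`. -/
noncomputable def ntr {V : Type*} (G : SimpleGraph V) (p Q : Finset V) : ℕ :=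
  (p.image (tr G Q)).card

noncomputable def part {V κ : Type*} [Fintype V] (f : V → κ) (k : κ) : Finset V :=
  Finset.univ.filter (fun v => f v = k)

noncomputable def outside {V κ : Type*} [Fintype V] (f : V → κ) (Y : Finset κ) : Finset V :=
  Finset.univ.filter (fun v => f v ∉ Y)

def Poor {V κ : Type*} [Fintype V] (G : SimpleGraph V) (f : V → κ) (k : κ) (s b : ℕ) : Prop :=
  ∃ Y : Finset κ, Y.card ≤ s ∧ ntr G (part f k) (outside f Y) ≤ b

lemma card_image_le_of {α β γ : Type*} [DecidableEq β] [DecidableEq γ] (s : Finset α) (f : α → β) (g : α → γ)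
    (h : ∀ x ∈ s, ∀ y ∈ s, g x = g y → f x = f y) : (s.image f).card ≤ (s.image g).card := by
  rcases s.eq_empty_or_nonempty with rfl | ⟨x0, _⟩
  · simp
  have : Nonempty α := ⟨x0⟩
  have hx : ∀ c ∈ s.image g, ∃ x ∈ s, g x = c := by
    intro c hc; simpa using hc
  choose! r hr1 hr2 using hx
  refine Finset.card_le_card_of_surjOn (fun c => f (r c)) ?_
  intro b hb
  simp only [Finset.coe_image, Set.mem_image, Finset.mem_coe] at hb
  obtain ⟨x, hxs, rfl⟩ := hb
  have hm : g x ∈ s.image g := Finset.mem_image_of_mem _ hxs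
  exact ⟨g x, hm, h _ (hr1 _ hm) _ hxs (hr2 _ hm)⟩

lemma ntr_le_card {V : Type*} (G : SimpleGraph V) (p Q : Finset V) : ntr G p Q ≤ p.card :=
  Finset.card_image_le

lemma mem_part {V κ : Type*} [Fintype V] {f : V → κ} {k : κ} {v : V} :
    v ∈ part f k ↔ f v = k := by simp [part]

lemma mem_outside {V κ : Type*} [Fintype V] {f : V → κ} {Y : Finset κ} {v : V} :
    v ∈ outside f Y ↔ f v ∉ Y := by simp [outside]

lemma tr_eq_iff {V : Type*} (G : SimpleGraph V) (Q : Finset V) (x y : V) :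
    tr G Q x = tr G Q y ↔ ∀ v ∈ Q, (G.Adj x v ↔ G.Adj y v) := by
  simp only [tr, Finset.ext_iff, Finset.mem_filter]
  exact ⟨fun h v hv => by simpa [hv] using h v, fun h v => by
    constructor
    · rintro ⟨a, b⟩; exact ⟨a, (h v a).1 b⟩
    · rintro ⟨a, b⟩; exact ⟨a, (h v a).2 b⟩⟩

lemma ntr_mono {V : Type*} (G : SimpleGraph V) {p p' Q Q' : Finset V} (hp : p ⊆ p')
    (hQ : Q ⊆ Q') : ntr G p Q ≤ ntr G p' Q' := by
  refine (card_image_le_of p (tr G Q) (tr G Q') ?_).trans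
    (Finset.card_le_card (Finset.image_subset_image hp))
  intro x _ y _ h
  rw [tr_eq_iff] at h ⊢
  exact fun v hv => h v (hQ hv)

lemma ntr_le_two_pow {V : Type*} (G : SimpleGraph V) (p q : Finset V) :
    ntr G p q ≤ 2 ^ ntr G q p := by
  rw [ntr, ntr, ← Finset.card_powerset]
  refine (card_image_le_of p (tr G q) (fun x => (q.filter (fun v => G.Adj x v)).image (tr G p))
    ?_).trans (Finset.card_le_card ?_)
  · intro x hx y hy h
    rw [tr_eq_iff]
    have key : ∀ x ∈ p, ∀ y ∈ p, (q.filter (fun v => G.Adj x v)).image (tr G p) =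
        (q.filter (fun v => G.Adj y v)).image (tr G p) → ∀ v ∈ q, G.Adj x v → G.Adj y v := by
      intro x hx y hy h v hv hxv
      have : tr G p v ∈ (q.filter (fun v => G.Adj x v)).image (tr G p) :=
        Finset.mem_image_of_mem _ (by simp [hv, hxv])
      rw [h] at this
      simp only [Finset.mem_image, Finset.mem_filter] at this
      obtain ⟨w, ⟨hw, hyw⟩, hwv⟩ := this
      rw [tr_eq_iff] at hwv
      exact ((hwv y hy).1 hyw.symm).symm
    exact fun v hv => ⟨key x hx y hy h v hv, key y hy x hx h.symm v hv⟩
  · intro c hc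
    simp only [Finset.mem_image] at hc
    obtain ⟨x, _, rfl⟩ := hc
    rw [Finset.mem_powerset]
    exact Finset.image_subset_image (Finset.filter_subset _ _)

lemma Poor.coarsen {V κ κ' : Type*} [Fintype V] {G : SimpleGraph V} {f : V → κ} {k : κ}
    {s b : ℕ} (h : Poor G f k s b) (g : κ → κ') (hg : ∀ v, g (f v) = g k → f v = k) :
    Poor G (fun v => g (f v)) (g k) s b := by
  obtain ⟨Y, hY, hn⟩ := h
  refine ⟨Y.image g, Finset.card_image_le.trans hY, le_trans (ntr_mono G ?_ ?_) hn⟩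
  · intro v hv
    simp only [part, Finset.mem_filter, Finset.mem_univ, true_and] at hv ⊢
    exact hg v hv
  · intro v hv
    simp only [outside, Finset.mem_filter, Finset.mem_univ, true_and] at hv ⊢
    exact fun hh => hv (Finset.mem_image_of_mem _ hh)

/-! ### From poor divisions to twin-width -/

def Bad {V κ : Type*} [Fintype V] (G : SimpleGraph V) (f : V → κ) (b : ℕ) (k l : κ) : Prop :=
  b < ntr G (part f k) (part f l) ∧ b < ntr G (part f l) (part f k)

lemma Bad.symm {V κ : Type*} [Fintype V] {G : SimpleGraph V} {f : V → κ} {b : ℕ} {k l : κ}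
    (h : Bad G f b k l) : Bad G f b l k := ⟨h.2, h.1⟩

def Qrel {V κ : Type*} [Fintype V] (G : SimpleGraph V) (f : V → κ) (b : ℕ) (x y : V) : Prop :=
  f x = f y ∧ ∀ v, ¬ Bad G f b (f x) (f v) → (G.Adj x v ↔ G.Adj y v)

lemma Qrel.symm {V κ : Type*} [Fintype V] {G : SimpleGraph V} {f : V → κ} {b : ℕ} {x y : V}
    (h : Qrel G f b x y) : Qrel G f b y x :=
  ⟨h.1.symm, fun v hv => (h.2 v (by rwa [h.1])).symm⟩

lemma Qrel.trans {V κ : Type*} [Fintype V] {G : SimpleGraph V} {f : V → κ} {b : ℕ} {x y z : V}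
    (h : Qrel G f b x y) (h' : Qrel G f b y z) : Qrel G f b x z :=
  ⟨h.1.trans h'.1, fun v hv => (h.2 v hv).trans (h'.2 v (by rwa [← h.1]))⟩

lemma part_subset_coarsen {V κ κ' : Type*} [Fintype V] (f : V → κ) (g : κ → κ') (k : κ) :
    part f k ⊆ part (fun v => g (f v)) (g k) := by
  intro v hv
  simp only [part, Finset.mem_filter, Finset.mem_univ, true_and] at hv ⊢
  rw [hv]

lemma Bad.coarsen {V κ κ' : Type*} [Fintype V] {G : SimpleGraph V} {f : V → κ} {b : ℕ} {k l : κ}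
    (h : Bad G f b k l) (g : κ → κ') : Bad G (fun v => g (f v)) b (g k) (g l) :=
  ⟨h.1.trans_le (ntr_mono G (part_subset_coarsen f g k) (part_subset_coarsen f g l)),
   h.2.trans_le (ntr_mono G (part_subset_coarsen f g l) (part_subset_coarsen f g k))⟩

lemma Qrel.coarsen {V κ κ' : Type*} [Fintype V] {G : SimpleGraph V} {f : V → κ} {b : ℕ} {x y : V}
    (h : Qrel G f b x y) (g : κ → κ') : Qrel G (fun v => g (f v)) b x y :=
  ⟨by simp only [h.1], fun v hv => h.2 v (fun hb => hv (hb.coarsen g))⟩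

lemma bad_subset {V κ : Type*} [Fintype V] {G : SimpleGraph V} {f : V → κ} {b : ℕ} {k : κ}
    {Y : Finset κ} (hn : ntr G (part f k) (outside f Y) ≤ b) {l : κ} (h : Bad G f b k l) :
    l ∈ Y := by
  by_contra hl
  have : ntr G (part f k) (part f l) ≤ ntr G (part f k) (outside f Y) := by
    refine ntr_mono G subset_rfl ?_
    intro v hv
    simp only [part, outside, Finset.mem_filter, Finset.mem_univ, true_and] at hv ⊢
    rwa [hv]
  have := h.1
  omega

/-- number of `Qrel`-classes in a part. -/
lemma card_le_of_not_Qrel {V κ : Type*} [Fintype V] {G : SimpleGraph V} {f : V → κ}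
    {s b : ℕ} {k : κ} (h : Poor G f k s b) (X : Finset V) (hX : ∀ x ∈ X, f x = k)
    (hq : ∀ x ∈ X, ∀ y ∈ X, Qrel G f b x y → x = y) : X.card ≤ b * (2 ^ b) ^ s := by
  obtain ⟨Y, hY, hn⟩ := h
  let code2 : V → (Y → Finset V) := fun x l => if Bad G f b k l then ∅ else tr G (part f l) x
  let code : V → Finset V × (Y → Finset V) := fun x => (tr G (outside f Y) x, code2 x)
  have hXk : X ⊆ part f k := by
    intro v hv
    simp only [part, Finset.mem_filter, Finset.mem_univ, true_and]
    exact hX v hv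
  have hcard : X.card ≤ ((X.image (tr G (outside f Y))) ×ˢ
      Fintype.piFinset (fun l : Y => X.image (fun x => code2 x l))).card := by
    refine Finset.card_le_card_of_injOn code ?_ ?_
    · intro x hx
      simp only [code, Finset.coe_product, Set.mem_prod, Finset.mem_coe, Fintype.mem_piFinset]
      exact ⟨Finset.mem_image_of_mem _ hx, fun l => Finset.mem_image.2 ⟨x, hx, rfl⟩⟩
    · intro x hx y hy hxy
      apply hq x hx y hy
      refine ⟨(hX x hx).trans (hX y hy).symm, ?_⟩
      intro v hv
      rw [hX x hx] at hv
      simp only [code, Prod.mk.injEq] at hxy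
      by_cases hvY : f v ∈ Y
      · have := congrFun hxy.2 ⟨f v, hvY⟩
        simp only [code2, if_neg hv] at this
        rw [tr_eq_iff] at this
        exact this v (by simp [part])
      · have := hxy.1
        rw [tr_eq_iff] at this
        exact this v (by simp [outside, hvY])
  refine hcard.trans ?_
  rw [Finset.card_product, Fintype.card_piFinset]
  refine Nat.mul_le_mul ((ntr_mono G hXk subset_rfl).trans hn) ?_
  calc ∏ l : Y, (X.image (fun x => code2 x l)).card ≤ ∏ _l : Y, 2 ^ b := by
        refine Finset.prod_le_prod' fun l _ => ?_
        by_cases hb : Bad G f b k l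
        · simp only [code2, if_pos hb]
          have : (X.image (fun _ => (∅ : Finset V))).card ≤ 1 := by
            apply Finset.card_le_one.2
            intro a ha c hc
            simp only [Finset.mem_image] at ha hc
            obtain ⟨_, _, rfl⟩ := ha
            obtain ⟨_, _, rfl⟩ := hc
            rfl
          exact this.trans Nat.one_le_two_pow
        · simp only [code2, if_neg hb]
          have h1 : (X.image (tr G (part f l))).card ≤ ntr G (part f k) (part f l) :=
            ntr_mono G hXk subset_rfl
          refine h1.trans ?_
          by_cases h2 : ntr G (part f k) (part f l) ≤ b
          · exact h2.trans Nat.lt_two_pow_self.le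
          · have h3 : ntr G (part f l) (part f k) ≤ b := by
              by_contra h3
              exact hb ⟨by omega, by omega⟩
            exact (ntr_le_two_pow G _ _).trans (Nat.pow_le_pow_right (by norm_num) h3)
    _ = (2 ^ b) ^ Y.card := by simp
    _ ≤ (2 ^ b) ^ s := Nat.pow_le_pow_right (by positivity) hY

lemma ntr_pos {V : Type*} (G : SimpleGraph V) {p Q : Finset V} {x : V} (hx : x ∈ p) :
    1 ≤ ntr G p Q := Finset.card_pos.2 ⟨_, Finset.mem_image_of_mem _ hx⟩

lemma ntr_le_of {V : Type*} (G : SimpleGraph V) (p Q T : Finset V)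
    (h : ∀ x ∈ p, ∀ y ∈ p, tr G T x = tr G T y → tr G Q x = tr G Q y) :
    ntr G p Q ≤ ntr G p T := card_image_le_of p (tr G Q) (tr G T) h


/-! ### Merging steps -/

def mergeSets {V : Type*} (W : Set (Set V)) (X Y : Set V) : Set (Set V) :=
  (W \ {X, Y}) ∪ {X ∪ Y}

lemma isPartition_merge {V : Type*} {W : Set (Set V)} (hW : IsPartitionOf W) {X Y : Set V}
    (hX : X ∈ W) (hY : Y ∈ W) : IsPartitionOf (mergeSets W X Y) := by
  refine ⟨?_, ?_⟩
  · rintro p (⟨hp, _⟩ | hp)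
    · exact hW.1 p hp
    · rw [Set.mem_singleton_iff.1 hp]
      exact (hW.1 X hX).mono Set.subset_union_left
  · intro v
    obtain ⟨p, ⟨hp, hv⟩, hu⟩ := hW.2 v
    by_cases h : p = X ∨ p = Y
    · refine ⟨X ∪ Y, ⟨Or.inr rfl, ?_⟩, ?_⟩
      · rcases h with rfl | rfl
        · exact Or.inl hv
        · exact Or.inr hv
      · rintro q ⟨⟨hq, hq'⟩ | hq, hvq⟩
        · exfalso
          apply hq'
          rw [hu q ⟨hq, hvq⟩]
          exact h
        · exact hq
    · refine ⟨p, ⟨Or.inl ⟨hp, h⟩, hv⟩, ?_⟩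
      rintro q ⟨⟨hq, hq'⟩ | hq, hvq⟩
      · exact hu q ⟨hq, hvq⟩
      · exfalso
        rw [Set.mem_singleton_iff.1 hq] at hvq
        rcases hvq with hvq | hvq
        · exact h (Or.inl (hu X ⟨hX, hvq⟩).symm)
        · exact h (Or.inr (hu Y ⟨hY, hvq⟩).symm)

lemma part_eq {V : Type*} {W : Set (Set V)} (hW : IsPartitionOf W) {X Y : Set V}
    (hX : X ∈ W) (hY : Y ∈ W) {v : V} (h1 : v ∈ X) (h2 : v ∈ Y) : X = Y := by
  obtain ⟨p, _, hu⟩ := hW.2 v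
  rw [hu X ⟨hX, h1⟩, hu Y ⟨hY, h2⟩]

lemma ncard_merge {V : Type*} [Finite V] {W : Set (Set V)} (hW : IsPartitionOf W) {X Y : Set V}
    (hX : X ∈ W) (hY : Y ∈ W) (hXY : X ≠ Y) : (mergeSets W X Y).ncard + 1 = W.ncard := by
  have hnot : X ∪ Y ∉ W \ {X, Y} := by
    rintro ⟨h1, h2⟩
    obtain ⟨x, hx⟩ := hW.1 X hX
    exact h2 (Or.inl (part_eq hW h1 hX (Or.inl hx) hx))
  have h1 : (mergeSets W X Y).ncard = (W \ {X, Y}).ncard + 1 := by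
    rw [mergeSets, Set.union_singleton, Set.ncard_insert_of_notMem hnot (Set.toFinite _)]
  have h2 : (W \ {X, Y}).ncard + ({X, Y} : Set (Set V)).ncard = W.ncard := by
    apply Set.ncard_sdiff_add_ncard_of_subset
    · rintro p (rfl | rfl) <;> assumption
    · exact Set.toFinite _
  rw [Set.ncard_pair hXY] at h2
  omega

lemma ncard_merge_filter {V : Type*} [Finite V] {W : Set (Set V)} {X Y : Set V}
    (hX : X ∈ W) (hY : Y ∈ W) (T : Set V) :
    {Z | Z ∈ mergeSets W X Y ∧ (Z ∩ T).Nonempty}.ncard ≤ {Z | Z ∈ W ∧ (Z ∩ T).Nonempty}.ncard := by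
  let φ : Set V → Set V := fun Z => if Z = X ∨ Z = Y then X ∪ Y else Z
  refine le_trans (Set.ncard_le_ncard (t := φ '' {Z | Z ∈ W ∧ (Z ∩ T).Nonempty}) ?_
    (Set.toFinite _)) (Set.ncard_image_le (Set.toFinite _))
  rintro Z ⟨⟨hZ, hZ'⟩ | hZ, hne⟩
  · exact ⟨Z, ⟨hZ, hne⟩, if_neg hZ'⟩
  · rw [Set.mem_singleton_iff.1 hZ] at hne ⊢
    obtain ⟨v, hv | hv, hvT⟩ := hne
    · exact ⟨X, ⟨hX, v, hv, hvT⟩, if_pos (Or.inl rfl)⟩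
    · exact ⟨Y, ⟨hY, v, hv, hvT⟩, if_pos (Or.inr rfl)⟩

lemma isPartition_singletons {V : Type*} : IsPartitionOf {s : Set V | ∃ v : V, s = {v}} := by
  refine ⟨?_, ?_⟩
  · rintro p ⟨v, rfl⟩
    exact Set.singleton_nonempty v
  · intro v
    refine ⟨{v}, ⟨⟨v, rfl⟩, rfl⟩, ?_⟩
    rintro q ⟨⟨w, rfl⟩, hv⟩
    rw [Set.mem_singleton_iff.1 hv]

lemma ncard_singletons {V : Type*} [Fintype V] :
    {s : Set V | ∃ v : V, s = {v}}.ncard = Fintype.card V := by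
  have : {s : Set V | ∃ v : V, s = {v}} = (fun v : V => ({v} : Set V)) '' Set.univ := by
    ext s; simp [eq_comm]
  rw [this, Set.ncard_image_of_injective _ Set.singleton_injective, Set.ncard_univ,
    Nat.card_eq_fintype_card]

lemma hasTwinWidthLE_of_good {V : Type*} [Fintype V] (G : SimpleGraph V) (d : ℕ)
    (Good : Set (Set V) → Prop) (h0 : Good {s : Set V | ∃ v : V, s = {v}})
    (hred : ∀ W, IsPartitionOf W → Good W → RedDegLE G W d)
    (hstep : ∀ W, IsPartitionOf W → Good W → (∃ X ∈ W, ∃ Y ∈ W, X ≠ Y) →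
      ∃ X ∈ W, ∃ Y ∈ W, X ≠ Y ∧ Good (mergeSets W X Y)) : HasTwinWidthLE G d := by
  have hnext : ∀ W : {W : Set (Set V) // IsPartitionOf W ∧ Good W},
      ∃ W' : {W : Set (Set V) // IsPartitionOf W ∧ Good W}, 2 ≤ W.1.ncard →
        ∃ X ∈ W.1, ∃ Y ∈ W.1, X ≠ Y ∧ W'.1 = mergeSets W.1 X Y := by
    rintro ⟨W, hW, hg⟩
    by_cases h : 2 ≤ W.ncard
    · have h' : ∃ X ∈ W, ∃ Y ∈ W, X ≠ Y := by
        obtain ⟨a, b, ha, hb, hab⟩ := (Set.one_lt_ncard_iff (Set.toFinite _)).1 h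
        exact ⟨a, ha, b, hb, hab⟩
      obtain ⟨X, hX, Y, hY, hXY, hm⟩ := hstep W hW hg h'
      exact ⟨⟨_, isPartition_merge hW hX hY, hm⟩, fun _ => ⟨X, hX, Y, hY, hXY, rfl⟩⟩
    · exact ⟨⟨W, hW, hg⟩, fun h' => absurd h' h⟩
  choose next hn using hnext
  let sq : ℕ → {W : Set (Set V) // IsPartitionOf W ∧ Good W} := fun k =>
    Nat.rec ⟨_, isPartition_singletons, h0⟩ (fun _ W => next W) k
  have hs0 : (sq 0).1 = {s : Set V | ∃ v : V, s = {v}} := rfl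
  have hs : ∀ k, sq (k + 1) = next (sq k) := fun k => rfl
  have hc : ∀ k, k + 1 ≤ Fintype.card V → (sq k).1.ncard + k = Fintype.card V := by
    intro k
    induction k with
    | zero => intro _; rw [hs0, ncard_singletons]; rfl
    | succ k ih =>
      intro hk
      have h1 := ih (by omega)
      obtain ⟨X, hX, Y, hY, hXY, he⟩ := hn (sq k) (by omega)
      have := ncard_merge (sq k).2.1 hX hY hXY
      rw [← he, ← hs] at this
      omega
  refine ⟨fun i => (sq (Fintype.card V - i)).1, ?_, ?_, ?_, ?_⟩
  · simp only [Nat.sub_self]; exact hs0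
  · intro hpos
    have h1 := hc (Fintype.card V - 1) (by omega)
    have h2 : (sq (Fintype.card V - 1)).1.ncard = 1 := by omega
    obtain ⟨A, hA⟩ := Set.ncard_eq_one.1 h2
    show (sq (Fintype.card V - 1)).1 = _
    have hp := (sq (Fintype.card V - 1)).2.1
    rw [hA] at hp ⊢
    congr 1
    ext v
    obtain ⟨p, ⟨hp1, hp2⟩, _⟩ := hp.2 v
    rw [Set.mem_singleton_iff.1 hp1] at hp2
    simpa using hp2
  · intro i hi hin
    have e : Fintype.card V - i = (Fintype.card V - (i + 1)) + 1 := by omega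
    have h1 := hc (Fintype.card V - (i + 1)) (by omega)
    obtain ⟨X, hX, Y, hY, hXY, he⟩ := hn (sq (Fintype.card V - (i + 1))) (by omega)
    refine ⟨X, Y, hX, hY, hXY, ?_⟩
    show (sq (Fintype.card V - i)).1 = _
    rw [e, hs, he]; rfl
  · intro i _ _
    exact ⟨(sq _).2.1, hred _ (sq _).2.1 (sq _).2.2⟩

/-! ### Interval divisions -/

def IsDiv {n : ℕ} (f : Fin n → ℕ) (N : ℕ) : Prop :=
  Monotone f ∧ ∀ k, (∃ v, f v = k) ↔ k < N

def mk2 (k i : ℕ) : ℕ := if i ≤ k then i else i - 1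

lemma isDiv_merge {n : ℕ} {f : Fin n → ℕ} {N k : ℕ} (hf : IsDiv f N) (hk : k + 1 < N) :
    IsDiv (fun v => mk2 k (f v)) (N - 1) := by
  refine ⟨?_, ?_⟩
  · intro v w hvw
    have := hf.1 hvw
    simp only [mk2]
    split_ifs <;> omega
  · intro j
    constructor
    · rintro ⟨v, hv⟩
      have := (hf.2 (f v)).1 ⟨v, rfl⟩
      simp only [mk2] at hv
      split_ifs at hv <;> omega
    · intro hj
      by_cases h : j ≤ k
      · obtain ⟨v, hv⟩ := (hf.2 j).2 (by omega)
        exact ⟨v, by simp [mk2, hv, h]⟩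
      · obtain ⟨v, hv⟩ := (hf.2 (j + 1)).2 (by omega)
        refine ⟨v, ?_⟩
        simp only [mk2, hv]
        rw [if_neg (by omega)]; omega

lemma exists_merge {n : ℕ} {G : SimpleGraph (Fin n)} {B : ℕ}
    (H : ∀ N, 1 ≤ N → ∀ f : Fin n → ℕ, IsDiv f N → ∃ k < N, Poor G f k B B)
    {f : Fin n → ℕ} {N : ℕ} (hf : IsDiv f N) (hN : 2 ≤ N) (hp : ∀ k, Poor G f k (3 * B) B) :
    ∃ k, IsDiv (fun v => mk2 k (f v)) (N - 1) ∧
      ∀ j, Poor G (fun v => mk2 k (f v)) j (3 * B) B := by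
  let g : ℕ → ℕ := fun i => min (i / 2) (N / 2 - 1)
  have hg : IsDiv (fun v => g (f v)) (N / 2) := by
    refine ⟨?_, ?_⟩
    · intro v w hvw
      have := hf.1 hvw
      simp only [g]
      omega
    · intro j
      constructor
      · rintro ⟨v, hv⟩
        simp only [g] at hv
        omega
      · intro hj
        obtain ⟨v, hv⟩ := (hf.2 (2 * j)).2 (by omega)
        refine ⟨v, ?_⟩
        simp only [g, hv]
        omega
  obtain ⟨l, hl, Y', hY', hn⟩ := H (N / 2) (by omega) _ hg
  refine ⟨2 * l, isDiv_merge hf (by omega), ?_⟩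
  intro j
  by_cases hj : j = 2 * l
  · subst hj
    refine ⟨(Y'.biUnion (fun y => Finset.Icc (2 * y) (2 * y + 2))).image (mk2 (2 * l)), ?_, ?_⟩
    · refine Finset.card_image_le.trans (Finset.card_biUnion_le.trans ?_)
      calc ∑ y ∈ Y', (Finset.Icc (2 * y) (2 * y + 2)).card = ∑ y ∈ Y', 3 := by
            refine Finset.sum_congr rfl fun y _ => ?_
            simp; omega
        _ = Y'.card * 3 := by simp
        _ ≤ 3 * B := by omega
    · refine le_trans (ntr_mono G ?_ ?_) hn
      · intro v hv
        rw [mem_part] at hv ⊢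
        simp only [mk2, g] at hv ⊢
        split_ifs at hv <;> omega
      · intro v hv
        simp only [outside, Finset.mem_filter, Finset.mem_univ, true_and] at hv ⊢
        intro hh
        apply hv
        apply Finset.mem_image_of_mem
        rw [Finset.mem_biUnion]
        refine ⟨_, hh, ?_⟩
        have := (hf.2 (f v)).1 ⟨v, rfl⟩
        simp only [g, Finset.mem_Icc]
        omega
  · by_cases hj' : j < 2 * l
    · have e : mk2 (2 * l) j = j := by simp only [mk2]; rw [if_pos (by omega)]
      have := (hp j).coarsen (mk2 (2 * l)) (by
        intro v hv
        rw [e] at hv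
        simp only [mk2] at hv
        split_ifs at hv <;> omega)
      rwa [e] at this
    · have e : mk2 (2 * l) (j + 1) = j := by simp only [mk2]; rw [if_neg (by omega)]; omega
      have := (hp (j + 1)).coarsen (mk2 (2 * l)) (by
        intro v hv
        rw [e] at hv
        simp only [mk2] at hv
        split_ifs at hv <;> omega)
      rwa [e] at this

def DivGood {n : ℕ} (G : SimpleGraph (Fin n)) (B M : ℕ) (W : Set (Set (Fin n))) (N : ℕ) : Prop :=
  ∃ f : Fin n → ℕ, IsDiv f N ∧ (∀ k, Poor G f k (3 * B) B) ∧
    (∀ X ∈ W, ∀ x ∈ X, ∀ y ∈ X, Qrel G f B x y) ∧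
    ∀ k, {Z | Z ∈ W ∧ (Z ∩ {v | f v = k}).Nonempty}.ncard ≤ 2 * M

lemma divGood_step {n : ℕ} {G : SimpleGraph (Fin n)} {B : ℕ}
    (H : ∀ N, 1 ≤ N → ∀ f : Fin n → ℕ, IsDiv f N → ∃ k < N, Poor G f k B B) {M : ℕ}
    (hM : M = B * (2 ^ B) ^ (3 * B)) (W : Set (Set (Fin n))) (hW : IsPartitionOf W)
    (hne : ∃ X ∈ W, ∃ Y ∈ W, X ≠ Y) :
    ∀ N, DivGood G B M W N → ∃ X ∈ W, ∃ Y ∈ W, X ≠ Y ∧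
      ((∃ N, DivGood G B M (mergeSets W X Y) N) ∨ (mergeSets W X Y).ncard ≤ 2 * M) := by
  intro N
  induction N with
  | zero =>
    rintro ⟨f, hf, _⟩
    obtain ⟨X, hX, _⟩ := hne
    obtain ⟨x, _⟩ := hW.1 X hX
    exact absurd ((hf.2 (f x)).1 ⟨x, rfl⟩) (by omega)
  | succ N ih =>
    rintro ⟨f, hf, hp, hr, hc⟩
    by_cases hmg : ∃ X ∈ W, ∃ Y ∈ W, X ≠ Y ∧ ∃ x ∈ X, ∃ y ∈ Y, Qrel G f B x y
    · obtain ⟨X, hX, Y, hY, hXY, x, hx, y, hy, hxy⟩ := hmg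
      refine ⟨X, hX, Y, hY, hXY, Or.inl ⟨N + 1, f, hf, hp, ?_, ?_⟩⟩
      · rintro Z (⟨hZ, _⟩ | hZ)
        · exact hr Z hZ
        · rw [Set.mem_singleton_iff.1 hZ]
          have key : ∀ u ∈ X ∪ Y, Qrel G f B u x := by
            rintro u (hu | hu)
            · exact hr X hX u hu x hx
            · exact (hr Y hY u hu y hy).trans hxy.symm
          intro u hu v hv
          exact (key u hu).trans (key v hv).symm
      · exact fun k => (ncard_merge_filter hX hY _).trans (hc k)
    · have hq : ∀ X ∈ W, ∀ Y ∈ W, ∀ x ∈ X, ∀ y ∈ Y, Qrel G f B x y → X = Y := by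
        intro X hX Y hY x hx y hy hxy
        by_contra hXY
        exact hmg ⟨X, hX, Y, hY, hXY, x, hx, y, hy, hxy⟩
      have hcM : ∀ k, {Z | Z ∈ W ∧ (Z ∩ {v | f v = k}).Nonempty}.ncard ≤ M := by
        intro k
        have hch : ∀ Z : Set (Fin n), ∃ v : Fin n, (Z ∩ {v | f v = k}).Nonempty →
            v ∈ Z ∧ f v = k := by
          intro Z
          by_cases h : (Z ∩ {v | f v = k}).Nonempty
          · obtain ⟨v, hv⟩ := h
            exact ⟨v, fun _ => hv⟩
          · obtain ⟨X, hX, _⟩ := hne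
            obtain ⟨x, _⟩ := hW.1 X hX
            exact ⟨x, fun h' => absurd h' h⟩
        choose r hr' using hch
        set S := {Z | Z ∈ W ∧ (Z ∩ {v | f v = k}).Nonempty} with hS
        have hinj : Set.InjOn r S := by
          intro Z hZ Z' hZ' he
          have h1 := hr' Z hZ.2
          have h2 := hr' Z' hZ'.2
          rw [he] at h1
          exact part_eq hW hZ.1 hZ'.1 h1.1 h2.1
        rw [← hinj.ncard_image, Set.ncard_eq_toFinset_card', hM]
        refine card_le_of_not_Qrel (hp k) _ ?_ ?_
        · intro x hx
          rw [Set.mem_toFinset] at hx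
          obtain ⟨Z, hZ, rfl⟩ := hx
          exact (hr' Z hZ.2).2
        · intro x hx y hy hxy
          rw [Set.mem_toFinset] at hx hy
          obtain ⟨Z, hZ, rfl⟩ := hx
          obtain ⟨Z', hZ', rfl⟩ := hy
          rw [hq Z hZ.1 Z' hZ'.1 _ (hr' Z hZ.2).1 _ (hr' Z' hZ'.2).1 hxy]
      by_cases hN : N = 0
      · obtain ⟨X, hX, Y, hY, hXY⟩ := hne
        refine ⟨X, hX, Y, hY, hXY, Or.inr ?_⟩
        have h1 := ncard_merge hW hX hY hXY
        have h2 : {Z | Z ∈ W ∧ (Z ∩ {v | f v = 0}).Nonempty} = W := by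
          ext Z
          refine ⟨fun h => h.1, fun h => ⟨h, ?_⟩⟩
          obtain ⟨z, hz⟩ := hW.1 Z h
          have := (hf.2 (f z)).1 ⟨z, rfl⟩
          exact ⟨z, hz, by show f z = 0; omega⟩
        have h3 := hcM 0
        rw [h2] at h3
        omega
      · obtain ⟨k, hf', hp'⟩ := exists_merge H hf (by omega) hp
        refine ih ⟨_, hf', hp', ?_, ?_⟩
        · intro X hX x hx y hy
          exact (hr X hX x hx y hy).coarsen (mk2 k)
        · intro j
          refine le_trans (Set.ncard_le_ncard (t := {Z | Z ∈ W ∧ (Z ∩ {v | f v = j}).Nonempty} ∪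
            {Z | Z ∈ W ∧ (Z ∩ {v | f v = j + 1}).Nonempty}) ?_ (Set.toFinite _))
            ((Set.ncard_union_le _ _).trans ?_)
          · rintro Z ⟨hZ, z, hz, hzj⟩
            simp only [Set.mem_ofPred_eq, mk2] at hzj
            have : f z = j ∨ f z = j + 1 := by split_ifs at hzj <;> omega
            rcases this with h | h
            · exact Or.inl ⟨hZ, z, hz, h⟩
            · exact Or.inr ⟨hZ, z, hz, h⟩
          · have := hcM j
            have := hcM (j + 1)
            omega

lemma divGood_red {n : ℕ} {G : SimpleGraph (Fin n)} {B M N : ℕ} {W : Set (Set (Fin n))}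
    (hW : IsPartitionOf W) (h : DivGood G B M W N) : RedDegLE G W (3 * B * (2 * M)) := by
  obtain ⟨f, hf, hp, hr, hc⟩ := h
  intro X hX
  obtain ⟨x0, hx0⟩ := hW.1 X hX
  obtain ⟨Y, hY, hn⟩ := hp (f x0)
  have hsub : {Z | Z ∈ W ∧ RedAdj G X Z} ⊆
      ⋃ k ∈ Y, {Z | Z ∈ W ∧ (Z ∩ {v | f v = k}).Nonempty} := by
    rintro Z ⟨hZ, -, ⟨x, hx, z, hz, hxz⟩, ⟨x', hx', z', hz', hxz'⟩⟩
    have hbad : Bad G f B (f x0) (f z) := by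
      by_contra hb
      apply hxz'
      have h1 := hr X hX x hx x' hx'
      have h2 := hr Z hZ z hz z' hz'
      have h3 := hr X hX x0 hx0 x hx
      have h4 := hr X hX x0 hx0 x' hx'
      have h5 : G.Adj x' z := (h1.2 z (by rwa [← h3.1])).1 hxz
      exact ((h2.2 x' (fun hb' => hb (by rw [h4.1]; exact hb'.symm))).1 h5.symm).symm
    simp only [Set.mem_iUnion]
    exact ⟨f z, bad_subset hn hbad, hZ, z, hz, rfl⟩
  refine (Set.ncard_le_ncard hsub (Set.toFinite _)).trans ?_
  refine (Finset.set_ncard_biUnion_le _ _).trans ?_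
  refine (Finset.sum_le_card_nsmul Y _ (2 * M) (fun k _ => hc k)).trans ?_
  rw [smul_eq_mul]
  exact Nat.mul_le_mul_right _ hY

theorem tww_of_poor {B : ℕ} (hB : 1 ≤ B) : ∃ d, ∀ n (G : SimpleGraph (Fin n)),
    (∀ N, 1 ≤ N → ∀ f : Fin n → ℕ, IsDiv f N → ∃ k < N, Poor G f k B B) →
    HasTwinWidthLE G d := by
  obtain ⟨M, hM⟩ : ∃ M, M = B * (2 ^ B) ^ (3 * B) := ⟨_, rfl⟩
  have hM1 : 1 ≤ M := by rw [hM]; exact Nat.mul_pos hB (by positivity)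
  refine ⟨3 * B * (2 * M), fun n G H => ?_⟩
  refine hasTwinWidthLE_of_good G _ (fun W => (∃ N, DivGood G B M W N) ∨ W.ncard ≤ 2 * M)
    ?_ ?_ ?_
  · left
    refine ⟨n, fun v => v.1, ⟨fun v w h => h, fun k => ⟨?_, fun h => ⟨⟨k, h⟩, rfl⟩⟩⟩, ?_, ?_, ?_⟩
    · rintro ⟨v, rfl⟩; exact v.2
    · intro k
      refine ⟨∅, by simp, ?_⟩
      refine ((ntr_le_card _ _ _).trans (Finset.card_le_one.2 ?_)).trans hB
      intro a ha b hb
      simp only [part, Finset.mem_filter, Finset.mem_univ, true_and] at ha hb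
      exact Fin.ext (ha.trans hb.symm)
    · rintro X ⟨v, rfl⟩ x hx y hy
      rw [Set.mem_singleton_iff.1 hx, Set.mem_singleton_iff.1 hy]
      exact ⟨rfl, fun _ _ => Iff.rfl⟩
    · intro k
      have : {Z : Set (Fin n) | Z ∈ {s : Set (Fin n) | ∃ v, s = {v}} ∧
          (Z ∩ {v | v.1 = k}).Nonempty}.ncard ≤ 1 := by
        rw [Set.ncard_le_one (Set.toFinite _)]
        rintro _ ⟨⟨v, rfl⟩, u, hu, huk⟩ _ ⟨⟨w, rfl⟩, t, ht, htk⟩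
        rw [Set.mem_singleton_iff] at hu ht
        subst hu; subst ht
        have huk : u.1 = k := huk
        have htk : t.1 = k := htk
        rw [Fin.ext (huk.trans htk.symm)]
      exact this.trans (by omega)
  · rintro W hW (⟨N, h⟩ | h)
    · exact divGood_red hW h
    · intro X _
      refine (Set.ncard_le_ncard (t := W) (fun Z hZ => hZ.1) (Set.toFinite _)).trans (h.trans ?_)
      nlinarith
  · rintro W hW (⟨N, h⟩ | h) hne
    · exact divGood_step H hM W hW hne N h
    · obtain ⟨X, hX, Y, hY, hXY⟩ := hne
      refine ⟨X, hX, Y, hY, hXY, Or.inr ?_⟩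
      have := ncard_merge hW hX hY hXY
      omega

/-! ### Counting coloured substructures -/

def SU {n : ℕ} (U : Fin 4 → Finset (Fin n)) : Finset (Fin n) := Finset.univ.biUnion U

def ColIso {n : ℕ} (G : SimpleGraph (Fin n)) (U U' : Fin 4 → Finset (Fin n)) : Prop :=
  ∃ φ : Fin n → Fin n, StrictMonoOn φ (SU U : Set (Fin n)) ∧ (∀ a, (U a).image φ = U' a) ∧
    ∀ x ∈ SU U, ∀ y ∈ SU U, (G.Adj x y ↔ G.Adj (φ x) (φ y))

def Enc {n : ℕ} (G : SimpleGraph (Fin n)) (A : ℕ) : Prop :=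
  ∀ m, 1 ≤ m → ∃ code : (Fin 4 → Finset (Fin n)) → Fin (A ^ m),
    ∀ U U', (SU U).card ≤ m → (SU U').card ≤ m → code U = code U' → ColIso G U U'

lemma colIso_of_emb {n k : ℕ} (G : SimpleGraph (Fin n)) (U U' : Fin 4 → Finset (Fin n))
    (h : (SU U).card = k) (h' : (SU U').card = k)
    (hG : SimpleGraph.comap ((SU U).orderEmbOfFin h) G =
      SimpleGraph.comap ((SU U').orderEmbOfFin h') G)
    (hc : ∀ a i, (SU U).orderEmbOfFin h i ∈ U a ↔ (SU U').orderEmbOfFin h' i ∈ U' a) :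
    ColIso G U U' := by
  set e := (SU U).orderEmbOfFin h with he
  set e' := (SU U').orderEmbOfFin h' with he'
  have hr : ∀ v ∈ SU U, ∃ i, e i = v := by
    intro v hv
    have : v ∈ Set.range e := by rw [he, Finset.range_orderEmbOfFin]; exact hv
    exact this
  have hr' : ∀ v ∈ SU U', ∃ i, e' i = v := by
    intro v hv
    have : v ∈ Set.range e' := by rw [he', Finset.range_orderEmbOfFin]; exact hv
    exact this
  let φ : Fin n → Fin n := Function.extend e e' id
  have hφ : ∀ i, φ (e i) = e' i := fun i => e.injective.extend_apply _ _ i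
  refine ⟨φ, ?_, ?_, ?_⟩
  · intro x hx y hy hxy
    obtain ⟨i, rfl⟩ := hr x hx
    obtain ⟨j, rfl⟩ := hr y hy
    rw [hφ, hφ]
    exact e'.strictMono (e.lt_iff_lt.1 hxy)
  · intro a
    ext w
    rw [Finset.mem_image]
    constructor
    · rintro ⟨v, hv, rfl⟩
      obtain ⟨i, rfl⟩ := hr v (Finset.mem_biUnion.2 ⟨a, Finset.mem_univ _, hv⟩)
      rw [hφ]
      exact (hc a i).1 hv
    · intro hw
      obtain ⟨i, rfl⟩ := hr' w (Finset.mem_biUnion.2 ⟨a, Finset.mem_univ _, hw⟩)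
      exact ⟨e i, (hc a i).2 hw, hφ i⟩
  · intro x hx y hy
    obtain ⟨i, rfl⟩ := hr x hx
    obtain ⟨j, rfl⟩ := hr y hy
    rw [hφ, hφ]
    have : (SimpleGraph.comap e G).Adj i j ↔ (SimpleGraph.comap e' G).Adj i j := by rw [hG]
    simpa using this

lemma exists_enc (C : (n : ℕ) → Set (SimpleGraph (Fin n)))
    (hereditary : ∀ (n : ℕ), ∀ G ∈ C n, ∀ s : Finset (Fin n),
      SimpleGraph.comap
        (fun i : Fin s.card => ((s.orderIsoOfFin rfl i : s) : Fin n)) G ∈ C s.card)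
    (small : ∃ c K : ℝ, 0 < c ∧ 0 < K ∧
      ∀ n : ℕ, ((C n).ncard : ℝ) ≤ K * c ^ n) :
    ∃ A, 1 ≤ A ∧ ∀ n, ∀ G ∈ C n, Enc G A := by
  obtain ⟨c, K, hc, hK, hs⟩ := small
  obtain ⟨c', hc'⟩ : ∃ c' : ℕ, c' = ⌈c⌉₊ + 1 := ⟨_, rfl⟩
  obtain ⟨K', hK'⟩ : ∃ K' : ℕ, K' = ⌈K⌉₊ + 1 := ⟨_, rfl⟩
  have hcc : c ≤ c' := by rw [hc']; push_cast; linarith [Nat.le_ceil c]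
  have hKK : K ≤ K' := by rw [hK']; push_cast; linarith [Nat.le_ceil K]
  have hs' : ∀ n, (C n).ncard ≤ K' * c' ^ n := by
    intro n
    have : ((C n).ncard : ℝ) ≤ ((K' * c' ^ n : ℕ) : ℝ) := by
      refine (hs n).trans ?_
      push_cast
      gcongr
    exact_mod_cast this
  have hA1 : 1 ≤ 2 * K' * (16 * c') := by
    have h1 : 1 ≤ K' := by omega
    have h2 : 1 ≤ c' := by omega
    nlinarith
  refine ⟨2 * K' * (16 * c'), hA1, ?_⟩
  intro n G hG m hm
  let Code := Σ k : Fin (m + 1), (C k.1) × (Fin 4 → Set (Fin k.1))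
  have hher : ∀ (s : Finset (Fin n)) (k : ℕ) (h : s.card = k),
      SimpleGraph.comap (s.orderEmbOfFin h) G ∈ C k := by
    intro s k h
    subst h
    exact hereditary n G hG s
  let tau : (U : Fin 4 → Finset (Fin n)) → (k : ℕ) → (SU U).card = k →
      (C k) × (Fin 4 → Set (Fin k)) := fun U k h =>
    (⟨SimpleGraph.comap ((SU U).orderEmbOfFin h) G, hher _ k h⟩,
      fun a => {i | (SU U).orderEmbOfFin h i ∈ U a})
  let mk : (U : Fin 4 → Finset (Fin n)) → (SU U).card ≤ m → Code := fun U h =>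
    ⟨⟨(SU U).card, by omega⟩, tau U _ rfl⟩
  have hmk : ∀ U h k (hk : (SU U).card = k) (hkm : k < m + 1), mk U h = ⟨⟨k, hkm⟩, tau U k hk⟩ := by
    intro U h k hk hkm
    subst hk
    rfl
  have hiso : ∀ U U' h h', mk U h = mk U' h' → ColIso G U U' := by
    intro U U' h h' he
    have h1 : (SU U).card = (SU U').card := congrArg (fun x : Code => x.1.1) he
    rw [hmk U h _ h1 (by omega), hmk U' h' _ rfl (by omega)] at he
    have h2 := eq_of_heq (Sigma.mk.inj he).2
    have h3 := congrArg Subtype.val (congrArg Prod.fst h2)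
    have h4 := congrArg Prod.snd h2
    refine colIso_of_emb G U U' h1 rfl h3 ?_
    intro a i
    have := congrFun h4 a
    exact Set.ext_iff.1 this i
  have hcard : Nat.card Code ≤ (2 * K' * (16 * c')) ^ m := by
    rw [Nat.card_sigma]
    calc ∑ k : Fin (m + 1), Nat.card ((C k.1) × (Fin 4 → Set (Fin k.1)))
        ≤ ∑ _k : Fin (m + 1), K' * (16 * c') ^ m := by
          refine Finset.sum_le_sum fun k _ => ?_
          rw [Nat.card_prod, Nat.card_coe_set_eq]
          have e : Nat.card (Fin 4 → Set (Fin k.1)) = 16 ^ k.1 := by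
            rw [Nat.card_fun]
            simp only [Nat.card_eq_fintype_card, Fintype.card_set, Fintype.card_fin]
            rw [← pow_mul, mul_comm, pow_mul]; norm_num
          rw [e]
          calc (C k.1).ncard * 16 ^ k.1 ≤ (K' * c' ^ k.1) * 16 ^ k.1 :=
                Nat.mul_le_mul_right _ (hs' _)
            _ = K' * (16 * c') ^ k.1 := by rw [mul_pow]; ring
            _ ≤ K' * (16 * c') ^ m := by
                refine Nat.mul_le_mul_left _ (Nat.pow_le_pow_right (by omega) (by omega))
      _ = (m + 1) * (K' * (16 * c') ^ m) := by simp
      _ ≤ 2 ^ m * (K' ^ m * (16 * c') ^ m) := by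
          refine Nat.mul_le_mul (Nat.lt_two_pow_self) (Nat.mul_le_mul_right _ ?_)
          exact Nat.le_self_pow (by omega) _
      _ = _ := by rw [mul_pow, mul_pow]; ring
  have hpos : 0 < (2 * K' * (16 * c')) ^ m := Nat.pow_pos hA1
  let inj : Code → Fin ((2 * K' * (16 * c')) ^ m) := fun x =>
    Fin.castLE hcard (Finite.equivFin Code x)
  have hinj : Function.Injective inj := fun x y h =>
    (Finite.equivFin Code).injective (Fin.castLE_injective hcard h)
  refine ⟨fun U => if h : (SU U).card ≤ m then inj (mk U h) else ⟨0, hpos⟩, ?_⟩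
  intro U U' h h' he
  simp only [dif_pos h, dif_pos h'] at he
  exact hiso U U' h h' (hinj he)

lemma strictMonoOn_fix {n : ℕ} {φ : Fin n → Fin n} {Z : Finset (Fin n)}
    (h : StrictMonoOn φ (Z : Set (Fin n))) (hZ : Z.image φ = Z) : ∀ z ∈ Z, φ z = z := by
  have h1 : (fun i => φ (Z.orderEmbOfFin rfl i)) = Z.orderEmbOfFin rfl := by
    refine Finset.orderEmbOfFin_unique rfl ?_ ?_
    · intro i
      have : φ (Z.orderEmbOfFin rfl i) ∈ Z.image φ :=
        Finset.mem_image_of_mem _ (Finset.orderEmbOfFin_mem _ _ _)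
      rwa [hZ] at this
    · intro i j hij
      exact h (Finset.orderEmbOfFin_mem _ _ _) (Finset.orderEmbOfFin_mem _ _ _)
        ((Z.orderEmbOfFin rfl).strictMono hij)
  intro z hz
  have : z ∈ Set.range (Z.orderEmbOfFin rfl) := by
    rw [Finset.range_orderEmbOfFin]; exact hz
  obtain ⟨i, rfl⟩ := this
  exact congrFun h1 i

lemma mem_SU {n : ℕ} {U : Fin 4 → Finset (Fin n)} {v : Fin n} (a : Fin 4) (h : v ∈ U a) :
    v ∈ SU U := Finset.mem_biUnion.2 ⟨a, Finset.mem_univ _, h⟩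

lemma sub_SU {n : ℕ} (U : Fin 4 → Finset (Fin n)) (a : Fin 4) :
    (U a : Set (Fin n)) ⊆ (SU U : Set (Fin n)) := fun _ h => mem_SU a h

/-- an isomorphism fixing the leftmost vertices of the parts preserves parts. -/
lemma iso_part {n N : ℕ} {f : Fin n → Fin N} (hf : Monotone f) {z : Fin N → Fin n}
    (hz : ∀ k, f (z k) = k) (hz' : ∀ v, z (f v) ≤ v) {φ : Fin n → Fin n}
    {U : Fin 4 → Finset (Fin n)} (hφ : StrictMonoOn φ (SU U : Set (Fin n)))
    (hU : U 0 = Finset.univ.image z) (hi : (U 0).image φ = U 0) :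
    ∀ v ∈ SU U, f (φ v) = f v := by
  have hzm : ∀ k, z k ∈ U 0 := fun k => by rw [hU]; exact Finset.mem_image_of_mem _ (Finset.mem_univ _)
  have hfix := strictMonoOn_fix (hφ.mono (sub_SU U 0)) hi
  intro v hv
  apply le_antisymm
  · by_contra hlt
    push Not at hlt
    have h1 : v < z (f (φ v)) := by
      by_contra h2
      push Not at h2
      have := hf h2
      rw [hz] at this
      exact absurd this (not_le.2 hlt)
    have h2 := hφ hv (mem_SU 0 (hzm _)) h1
    rw [hfix _ (hzm _)] at h2
    exact absurd (hz' (φ v)) (not_le.2 h2)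
  · have h1 := hφ.monotoneOn (mem_SU 0 (hzm (f v))) hv (hz' v)
    rw [hfix _ (hzm _)] at h1
    have := hf h1
    rwa [hz] at this

lemma card_SU_le {n : ℕ} (U : Fin 4 → Finset (Fin n)) :
    (SU U).card ≤ (U 0).card + (U 1).card + (U 2).card + (U 3).card := by
  refine Finset.card_biUnion_le.trans ?_
  rw [Fin.sum_univ_four]

lemma prod_traces {n N A : ℕ} (hN : 1 ≤ N) {G : SimpleGraph (Fin n)} (hE : Enc G A)
    {f : Fin n → Fin N} (hf : Monotone f) {z : Fin N → Fin n}
    (hz : ∀ k, f (z k) = k) (hz' : ∀ v, z (f v) ≤ v) (T : Finset (Fin n)) (hT : T.card ≤ N) :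
    ∏ i, ntr G (part f i) T ≤ A ^ (3 * N) := by
  obtain ⟨code, hcode⟩ := hE (3 * N) (by omega)
  have hch : ∀ (i : Fin N) (c : Finset (Fin n)), ∃ x : Fin n,
      c ∈ (part f i).image (tr G T) → f x = i ∧ tr G T x = c := by
    intro i c
    by_cases h : c ∈ (part f i).image (tr G T)
    · obtain ⟨x, hx, hxc⟩ := Finset.mem_image.1 h
      exact ⟨x, fun _ => ⟨mem_part.1 hx, hxc⟩⟩
    · exact ⟨z i, fun h' => absurd h' h⟩
  choose ρ hρ using hch
  let U : (Fin N → Finset (Fin n)) → Fin 4 → Finset (Fin n) := fun g =>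
    ![Finset.univ.image z, T, Finset.univ.image (fun i => ρ i (g i)), ∅]
  have hUc : ∀ g, (SU (U g)).card ≤ 3 * N := by
    intro g
    refine (card_SU_le _).trans ?_
    have h1 : (Finset.univ.image z).card ≤ N := Finset.card_image_le.trans (by simp)
    have h2 : (Finset.univ.image (fun i => ρ i (g i))).card ≤ N :=
      Finset.card_image_le.trans (by simp)
    show (Finset.univ.image z).card + T.card + (Finset.univ.image (fun i => ρ i (g i))).card +
      (∅ : Finset (Fin n)).card ≤ 3 * N
    rw [Finset.card_empty]
    omega
  have hmain : (Fintype.piFinset (fun i => (part f i).image (tr G T))).card ≤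
      (Finset.univ : Finset (Fin (A ^ (3 * N)))).card := by
    refine Finset.card_le_card_of_injOn (fun g => code (U g)) (fun _ _ => Finset.mem_univ _) ?_
    intro g hg g' hg' he
    rw [Finset.mem_coe, Fintype.mem_piFinset] at hg hg'
    obtain ⟨φ, hφ, hcol, hadj⟩ := hcode _ _ (hUc g) (hUc g') he
    have hpart := iso_part hf hz hz' hφ rfl (hcol 0)
    have hfixT := strictMonoOn_fix (hφ.mono (sub_SU _ 1)) (hcol 1)
    funext i
    have hxm : ρ i (g i) ∈ U g 2 := Finset.mem_image_of_mem (fun i => ρ i (g i)) (Finset.mem_univ i)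
    have h1 : φ (ρ i (g i)) ∈ U g' 2 := by
      rw [← hcol 2]; exact Finset.mem_image_of_mem _ hxm
    obtain ⟨j, -, hj⟩ := Finset.mem_image.1 h1
    have h2 := hpart _ (mem_SU 2 hxm)
    rw [← hj, (hρ j _ (hg' j)).1, (hρ i _ (hg i)).1] at h2
    subst h2
    rw [← (hρ j _ (hg j)).2, ← (hρ j _ (hg' j)).2, tr_eq_iff]
    intro t ht
    have := hadj _ (mem_SU 2 hxm) t (mem_SU 1 ht)
    rw [← hj, hfixT t ht] at this
    exact this
  rw [Fintype.card_piFinset, Finset.card_univ, Fintype.card_fin] at hmain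
  refine le_trans (le_of_eq ?_) hmain
  refine Finset.prod_congr rfl fun i _ => ?_
  simp only [ntr]
  congr!

def Splits {n N : ℕ} (G : SimpleGraph (Fin n)) (f : Fin n → Fin N) (T : Finset (Fin n))
    (i : Fin N) (c : Fin n) : Prop :=
  ∃ r r', f r = i ∧ f r' = i ∧ tr G T r = tr G T r' ∧ G.Adj r c ∧ ¬ G.Adj r' c

lemma ntr_insert_lt {n N : ℕ} {G : SimpleGraph (Fin n)} {f : Fin n → Fin N} {T : Finset (Fin n)}
    {i : Fin N} {c : Fin n} (h : Splits G f T i c) :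
    ntr G (part f i) T + 1 ≤ ntr G (part f i) (insert c T) := by
  obtain ⟨r, r', hr, hr', ht, h1, h2⟩ := h
  have hπ : ∀ x, tr G T x = (tr G (insert c T) x).filter (fun v => v ∈ T) := by
    intro x
    ext v
    simp only [tr, Finset.mem_filter, Finset.mem_insert]
    tauto
  have himg : (part f i).image (tr G T) =
      ((part f i).image (tr G (insert c T))).image (fun s => s.filter (fun v => v ∈ T)) := by
    rw [Finset.image_image]
    exact Finset.image_congr (fun x _ => hπ x)
  have hle : ntr G (part f i) T ≤ ntr G (part f i) (insert c T) :=
    ntr_mono G subset_rfl (Finset.subset_insert _ _)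
  by_contra hlt
  have heq : ((part f i).image (tr G T)).card = ((part f i).image (tr G (insert c T))).card := by
    have : ntr G (part f i) T = ntr G (part f i) (insert c T) := by omega
    simp only [ntr] at this
    convert this
  rw [himg, Finset.card_image_iff] at heq
  have hm : ∀ x, f x = i → tr G (insert c T) x ∈
      (((part f i).image (tr G (insert c T)) : Finset _) : Set (Finset (Fin n))) := fun x hx =>
    Finset.mem_coe.2 (Finset.mem_image_of_mem _ (mem_part.2 hx))
  have h3 := heq (hm r hr) (hm r' hr') (by
    show Finset.filter _ _ = Finset.filter _ _
    rw [← hπ, ← hπ, ht])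
  rw [tr_eq_iff] at h3
  exact h2 ((h3 c (Finset.mem_insert_self _ _)).1 h1)

lemma exists_T {n N : ℕ} (G : SimpleGraph (Fin n)) (f : Fin n → Fin N) {M : ℕ} (hM : 1 ≤ M) :
    ∃ T : Finset (Fin n), T.card ≤ N ∧ ∀ c : Fin n,
      (Finset.univ.filter (fun i => ntr G (part f i) T < M ∧ Splits G f T i c)).card ≤ M := by
  obtain ⟨T, -, hT⟩ := Finset.exists_max_image (Finset.univ : Finset (Finset (Fin n)))
    (fun T => ∑ i, min (ntr G (part f i) T) M + M * (n - T.card)) ⟨∅, Finset.mem_univ _⟩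
  have hcn : ∀ S : Finset (Fin n), S.card ≤ n := fun S => by
    simpa using Finset.card_le_univ S
  refine ⟨T, ?_, ?_⟩
  · have h := hT ∅ (Finset.mem_univ _)
    have h1 : ∑ i, min (ntr G (part f i) T) M ≤ N * M := by
      refine (Finset.sum_le_sum (g := fun _ => M) fun i _ => min_le_right _ _).trans ?_
      simp
    simp only [Finset.card_empty, Nat.sub_zero] at h
    have h2 := hcn T
    have h3 : M * n = M * (n - T.card) + M * T.card := by
      rw [← Nat.mul_add]; congr 1; omega
    have h4 : M * T.card ≤ M * N := by
      rw [mul_comm N M] at h1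
      omega
    exact Nat.le_of_mul_le_mul_left h4 hM
  · intro c
    by_cases hcT : c ∈ T
    · have : (Finset.univ.filter (fun i => ntr G (part f i) T < M ∧ Splits G f T i c)) = ∅ := by
        apply Finset.filter_eq_empty_iff.2
        rintro i - ⟨-, r, r', _, _, ht, h1, h2⟩
        rw [tr_eq_iff] at ht
        exact h2 ((ht c hcT).1 h1)
      rw [this]; simp
    · have h := hT (insert c T) (Finset.mem_univ _)
      simp only [Finset.card_insert_of_notMem hcT] at h
      have h2 := hcn (insert c T)
      rw [Finset.card_insert_of_notMem hcT] at h2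
      have h3 : M * (n - T.card) = M * (n - (T.card + 1)) + M := by
        have : n - T.card = (n - (T.card + 1)) + 1 := by omega
        rw [this]; ring
      have h4 : ∑ i, min (ntr G (part f i) T) M +
          (Finset.univ.filter (fun i => ntr G (part f i) T < M ∧ Splits G f T i c)).card ≤
          ∑ i, min (ntr G (part f i) (insert c T)) M := by
        rw [Finset.card_filter, ← Finset.sum_add_distrib]
        refine Finset.sum_le_sum fun i _ => ?_
        have hle : ntr G (part f i) T ≤ ntr G (part f i) (insert c T) :=
          ntr_mono G subset_rfl (Finset.subset_insert _ _)
        split_ifs with hi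
        · have := ntr_insert_lt hi.2
          have := hi.1
          omega
        · omega
      omega

lemma many_good {n N A : ℕ} (hN : 1 ≤ N) {G : SimpleGraph (Fin n)} (hE : Enc G A)
    {f : Fin n → Fin N} (hf : Monotone f) {z : Fin N → Fin n}
    (hz : ∀ k, f (z k) = k) (hz' : ∀ v, z (f v) ≤ v) (T : Finset (Fin n)) (hT : T.card ≤ N) :
    N < 2 * (Finset.univ.filter (fun i => ntr G (part f i) T < A ^ 6 + 1)).card := by
  have hp := prod_traces hN hE hf hz hz' T hT
  set I := Finset.univ.filter (fun i => ntr G (part f i) T < A ^ 6 + 1) with hI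
  by_contra hlt
  push Not at hlt
  have hIc : Iᶜ.card + I.card = N := by
    rw [Finset.card_compl_add_card]; simp
  have h1 : (A ^ 6 + 1) ^ Iᶜ.card ≤ ∏ i, ntr G (part f i) T := by
    rw [← Finset.prod_const]
    calc ∏ _i ∈ Iᶜ, (A ^ 6 + 1) ≤ ∏ i ∈ Iᶜ, ntr G (part f i) T := by
          refine Finset.prod_le_prod' fun i hi => ?_
          simp only [hI, Finset.mem_compl, Finset.mem_filter, Finset.mem_univ, true_and] at hi
          omega
      _ ≤ ∏ i, ntr G (part f i) T := by
          refine Finset.prod_le_prod_of_subset_of_one_le' (Finset.subset_univ _) fun i _ _ => ?_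
          exact ntr_pos G (mem_part.2 (hz i))
  have h2 : (A ^ 6 + 1) ^ N ≤ (A ^ 6) ^ N := by
    calc (A ^ 6 + 1) ^ N ≤ (A ^ 6 + 1) ^ (Iᶜ.card * 2) :=
          Nat.pow_le_pow_right (by omega) (by omega)
      _ = ((A ^ 6 + 1) ^ Iᶜ.card) ^ 2 := by rw [pow_mul]
      _ ≤ (A ^ (3 * N)) ^ 2 := Nat.pow_le_pow_left (h1.trans hp) 2
      _ = (A ^ 6) ^ N := by rw [← pow_mul, ← pow_mul]; congr 1; ring
  exact absurd h2 (not_le.2 (Nat.pow_lt_pow_left (Nat.lt_succ_self _) (by omega)))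

lemma poor_of_enc {n N A B M : ℕ} (hN : 1 ≤ N) {G : SimpleGraph (Fin n)} (hE : Enc G A)
    {f : Fin n → Fin N} (hf : Monotone f) (hsurj : Function.Surjective f)
    (hM : M = A ^ 6 + 1) (hB : B = M + A ^ 8 * 4 ^ M) : ∃ k, Poor G f k B B := by
  -- leftmost vertices of the parts
  have hzex : ∀ k, ∃ v, f v = k ∧ ∀ w, f w = k → v ≤ w := by
    intro k
    obtain ⟨v0, hv0⟩ := hsurj k
    have hne : (part f k).Nonempty := ⟨v0, mem_part.2 hv0⟩
    exact ⟨(part f k).min' hne, mem_part.1 (Finset.min'_mem _ _),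
      fun w hw => Finset.min'_le _ _ (mem_part.2 hw)⟩
  choose z hz hz2 using hzex
  have hz' : ∀ v, z (f v) ≤ v := fun v => hz2 (f v) v rfl
  by_contra hno
  push Not at hno
  obtain ⟨T, hT, hsp⟩ := exists_T G f (M := M) (by omega)
  have hgood := many_good hN hE hf hz hz' T hT
  rw [← hM] at hgood
  set I := Finset.univ.filter (fun i => ntr G (part f i) T < M) with hI
  have hIN : I.card ≤ N := by simpa using Finset.card_le_univ I
  let J : Fin N → Finset (Fin N) := fun i =>
    Finset.univ.filter (fun j => ∃ c, f c = j ∧ Splits G f T i c)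
  have hJ : ∀ i ∈ I, B ≤ (J i).card := by
    intro i hi
    by_contra hlt
    push Not at hlt
    apply hno i
    refine ⟨J i, hlt.le, ?_⟩
    have h1 : ntr G (part f i) (outside f (J i)) ≤ ntr G (part f i) T := by
      refine ntr_le_of G _ _ _ ?_
      intro x hx y hy hxy
      rw [tr_eq_iff]
      intro v hv
      rw [mem_outside] at hv
      by_contra hne
      apply hv
      simp only [J, Finset.mem_filter, Finset.mem_univ, true_and]
      refine ⟨v, rfl, ?_⟩
      by_cases hxv : G.Adj x v
      · exact ⟨x, y, mem_part.1 hx, mem_part.1 hy, hxy, hxv, fun h => hne ⟨fun _ => h, fun _ => hxv⟩⟩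
      · refine ⟨y, x, mem_part.1 hy, mem_part.1 hx, hxy.symm, ?_, hxv⟩
        by_contra hyv
        exact hne ⟨fun h => absurd h hxv, fun h => absurd h hyv⟩
    have h2 : ntr G (part f i) T < M := (Finset.mem_filter.1 hi).2
    omega
  -- witnesses
  have hw : ∀ i j, ∃ r r' c, j ∈ J i → f c = j ∧ f r = i ∧ f r' = i ∧ tr G T r = tr G T r' ∧
      G.Adj r c ∧ ¬ G.Adj r' c := by
    intro i j
    by_cases h : j ∈ J i
    · obtain ⟨c, hc, r, r', h1⟩ := (Finset.mem_filter.1 h).2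
      exact ⟨r, r', c, fun _ => ⟨hc, h1⟩⟩
    · exact ⟨z i, z i, z i, fun h' => absurd h' h⟩
  choose r r' c hrc using hw
  obtain ⟨code, hcode⟩ := hE (4 * N) (by omega)
  let U : (I → Fin N) → Fin 4 → Finset (Fin n) := fun g =>
    ![Finset.univ.image z, Finset.univ.image (fun i : I => r i (g i)),
      Finset.univ.image (fun i : I => r' i (g i)), Finset.univ.image (fun i : I => c i (g i))]
  have hUc : ∀ g, (SU (U g)).card ≤ 4 * N := by
    intro g
    refine (card_SU_le _).trans ?_
    have h0 : (Finset.univ.image z).card ≤ N := Finset.card_image_le.trans (by simp)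
    have h1 : ∀ F : I → Fin n, (Finset.univ.image F).card ≤ N := fun F =>
      Finset.card_image_le.trans (by simpa using hIN)
    have e1 := h1 (fun i : I => r i (g i))
    have e2 := h1 (fun i : I => r' i (g i))
    have e3 := h1 (fun i : I => c i (g i))
    show (Finset.univ.image z).card + (Finset.univ.image (fun i : I => r i (g i))).card +
      (Finset.univ.image (fun i : I => r' i (g i))).card +
      (Finset.univ.image (fun i : I => c i (g i))).card ≤ 4 * N
    omega
  let F := Fintype.piFinset (fun i : I => J i)
  have hfib : ∀ a ∈ F.image (fun g => code (U g)),
      (F.filter (fun g => code (U g) = a)).card ≤ 2 ^ (N * M) := by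
    intro a ha
    obtain ⟨g0, hg0, rfl⟩ := Finset.mem_image.1 ha
    have hg0J : ∀ i : I, g0 i ∈ J i := Fintype.mem_piFinset.1 hg0
    let D : I → Finset I := fun i => Finset.univ.filter (fun i' : I =>
      G.Adj (r i (g0 i)) (c i' (g0 i')) ∧ ¬ G.Adj (r' i (g0 i)) (c i' (g0 i')))
    have hsub : F.filter (fun g => code (U g) = code (U g0)) ⊆
        Fintype.piFinset (fun i => (D i).image g0) := by
      intro g hg
      obtain ⟨hgF, hge⟩ := Finset.mem_filter.1 hg
      have hgJ : ∀ i : I, g i ∈ J i := Fintype.mem_piFinset.1 hgF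
      rw [Fintype.mem_piFinset]
      intro i
      obtain ⟨φ, hφ, hcol, hadj⟩ := hcode _ _ (hUc g0) (hUc g) hge.symm
      have hpart := iso_part hf hz hz' hφ rfl (hcol 0)
      have hr0 : r i (g0 i) ∈ U g0 1 :=
        Finset.mem_image_of_mem (fun i : I => r i (g0 i)) (Finset.mem_univ i)
      have hr0' : r' i (g0 i) ∈ U g0 2 :=
        Finset.mem_image_of_mem (fun i : I => r' i (g0 i)) (Finset.mem_univ i)
      have hφr : φ (r i (g0 i)) = r i (g i) := by
        have h1 : φ (r i (g0 i)) ∈ U g 1 := by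
          rw [← hcol 1]; exact Finset.mem_image_of_mem _ hr0
        obtain ⟨j, -, hj⟩ := Finset.mem_image.1 h1
        have h2 := hpart _ (mem_SU 1 hr0)
        rw [← hj, (hrc j _ (hgJ j)).2.1, (hrc i _ (hg0J i)).2.1] at h2
        have h3 : j = i := Subtype.ext h2
        subst h3
        exact hj.symm
      have hφr' : φ (r' i (g0 i)) = r' i (g i) := by
        have h1 : φ (r' i (g0 i)) ∈ U g 2 := by
          rw [← hcol 2]; exact Finset.mem_image_of_mem _ hr0'
        obtain ⟨j, -, hj⟩ := Finset.mem_image.1 h1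
        have h2 := hpart _ (mem_SU 2 hr0')
        rw [← hj, (hrc j _ (hgJ j)).2.2.1, (hrc i _ (hg0J i)).2.2.1] at h2
        have h3 : j = i := Subtype.ext h2
        subst h3
        exact hj.symm
      have hcm : c i (g i) ∈ (U g0 3).image φ := by
        rw [hcol 3]
        exact Finset.mem_image_of_mem (fun i : I => c i (g i)) (Finset.mem_univ i)
      obtain ⟨d, hd, hdc⟩ := Finset.mem_image.1 hcm
      obtain ⟨i', -, hi'⟩ := Finset.mem_image.1 hd
      have hi' : c i' (g0 i') = d := hi'
      rw [Finset.mem_image]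
      have hgi := hrc i _ (hgJ i)
      refine ⟨i', ?_, ?_⟩
      · simp only [D, Finset.mem_filter, Finset.mem_univ, true_and, hi']
        rw [hadj _ (mem_SU 1 hr0) _ (mem_SU 3 hd), hadj _ (mem_SU 2 hr0') _ (mem_SU 3 hd),
          hφr, hφr', hdc]
        exact ⟨hgi.2.2.2.2.1, hgi.2.2.2.2.2⟩
      · have h2 := hpart _ (mem_SU 3 hd)
        rw [hdc, hgi.1, ← hi', (hrc i' _ (hg0J i')).1] at h2
        exact h2.symm
    refine (Finset.card_le_card hsub).trans ?_
    rw [Fintype.card_piFinset]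
    calc ∏ i, ((D i).image g0).card ≤ ∏ i, 2 ^ (D i).card :=
          Finset.prod_le_prod' fun i _ => Finset.card_image_le.trans Nat.lt_two_pow_self.le
      _ = 2 ^ ∑ i, (D i).card := Finset.prod_pow_eq_pow_sum _ _ _
      _ ≤ 2 ^ (N * M) := by
          refine Nat.pow_le_pow_right (by norm_num) ?_
          have hcomm : ∑ i, (D i).card = ∑ i' : I, (Finset.univ.filter (fun i : I =>
              G.Adj (r i (g0 i)) (c i' (g0 i')) ∧ ¬ G.Adj (r' i (g0 i)) (c i' (g0 i')))).card := by
            simp only [D, Finset.card_filter]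
            exact Finset.sum_comm
          rw [hcomm]
          refine (Finset.sum_le_card_nsmul _ _ M fun i' _ => ?_).trans ?_
          · refine le_trans ?_ (hsp (c i' (g0 i')))
            refine Finset.card_le_card_of_injOn (fun i : I => (i : Fin N)) ?_
              (Subtype.val_injective.injOn)
            intro i hi
            have hi := (Finset.mem_filter.1 (Finset.mem_coe.1 hi)).2
            have hri := hrc i _ (hg0J i)
            refine Finset.mem_coe.2 (Finset.mem_filter.2 ⟨Finset.mem_univ _,
              (Finset.mem_filter.1 i.2).2, r i (g0 i), r' i (g0 i), hri.2.1, hri.2.2.1,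
              hri.2.2.2.1, hi⟩)
          · simp only [Finset.card_univ, Fintype.card_coe, smul_eq_mul]
            exact Nat.mul_le_mul_right _ hIN
  have hF := Finset.card_le_mul_card_image F _ hfib
  have hF1 : F.card ≤ 2 ^ (N * M) * A ^ (4 * N) := by
    refine hF.trans (Nat.mul_le_mul_left _ ?_)
    simpa using Finset.card_le_univ (F.image (fun g => code (U g)))
  have hF2 : B ^ I.card ≤ F.card := by
    rw [Fintype.card_piFinset]
    calc B ^ I.card = ∏ _i : I, B := by simp
      _ ≤ _ := Finset.prod_le_prod' fun i _ => hJ i i.2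
  have h2 : B ^ N ≤ (A ^ 8 * 4 ^ M) ^ N := by
    calc B ^ N ≤ B ^ (I.card * 2) := Nat.pow_le_pow_right (by omega) (by omega)
      _ = (B ^ I.card) ^ 2 := by rw [pow_mul]
      _ ≤ (2 ^ (N * M) * A ^ (4 * N)) ^ 2 := Nat.pow_le_pow_left (hF2.trans hF1) 2
      _ = (A ^ 8 * 4 ^ M) ^ N := by
          rw [mul_pow, mul_pow, ← pow_mul, ← pow_mul, ← pow_mul, ← pow_mul,
            show (4 : ℕ) = 2 ^ 2 by norm_num, ← pow_mul, mul_comm]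
          congr 2 <;> ring
  exact absurd h2 (not_le.2 (Nat.pow_lt_pow_left (by omega) (by omega)))

theorem small_bounded (C : (n : ℕ) → Set (SimpleGraph (Fin n)))
    (hereditary : ∀ (n : ℕ), ∀ G ∈ C n, ∀ s : Finset (Fin n),
      SimpleGraph.comap
        (fun i : Fin s.card => ((s.orderIsoOfFin rfl i : s) : Fin n)) G ∈ C s.card)
    (small : ∃ c K : ℝ, 0 < c ∧ 0 < K ∧
      ∀ n : ℕ, ((C n).ncard : ℝ) ≤ K * c ^ n) :
    ∃ d : ℕ, ∀ n : ℕ, ∀ G ∈ C n, HasTwinWidthLE G d := by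
  obtain ⟨A, hA, hE⟩ := exists_enc C hereditary small
  obtain ⟨M, hM⟩ : ∃ M, M = A ^ 6 + 1 := ⟨_, rfl⟩
  obtain ⟨B, hB⟩ : ∃ B, B = M + A ^ 8 * 4 ^ M := ⟨_, rfl⟩
  obtain ⟨d, hd⟩ := tww_of_poor (B := B) (by omega)
  refine ⟨d, fun n G hG => hd n G ?_⟩
  intro N hN f hf
  have hlt : ∀ v, f v < N := fun v => (hf.2 (f v)).1 ⟨v, rfl⟩
  obtain ⟨k, hk⟩ := poor_of_enc hN (hE n G hG) (f := fun v => (⟨f v, hlt v⟩ : Fin N))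
    (fun v w h => hf.1 h) (fun k => by
      obtain ⟨v, hv⟩ := (hf.2 k.1).2 k.2
      exact ⟨v, Fin.ext hv⟩) hM hB
  exact ⟨k.1, k.2, hk.coarsen (fun j : Fin N => j.1) (fun v h => Fin.ext h)⟩

end TwwProof

/-- Every small hereditary class of ordered graphs has bounded
twin-width.  An `n`-vertex ordered graph is modelled, up to isomorphism of ordered
graphs, as a simple graph on `Fin n` (with its natural order); a class of ordered
graphs is a family `C n ⊆ SimpleGraph (Fin n)`.  Hereditary means: for every
`G ∈ C n` and every subset `s` of `Fin n`, the induced ordered subgraph on `s`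
(transported along the unique order isomorphism `Fin s.card ≃o s`) belongs to
`C s.card`.  Small means: there are constants `c > 0` and `K > 0` with
`|C n| ≤ K · c^n` for all `n` (the members of `C n` are exactly the isomorphism
classes of `n`-vertex ordered graphs in the class).  The conclusion is that some
`d` bounds the twin-width of every (underlying graph of a) graph in the class. -/
theorem stmt_13 (C : (n : ℕ) → Set (SimpleGraph (Fin n)))
    (hereditary : ∀ (n : ℕ), ∀ G ∈ C n, ∀ s : Finset (Fin n),
      SimpleGraph.comap
        (fun i : Fin s.card => ((s.orderIsoOfFin rfl i : s) : Fin n)) G ∈ C s.card)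
    (small : ∃ c K : ℝ, 0 < c ∧ 0 < K ∧
      ∀ n : ℕ, ((C n).ncard : ℝ) ≤ K * c ^ n) :
    ∃ d : ℕ, ∀ n : ℕ, ∀ G ∈ C n, HasTwinWidthLE G d := by
  exact small_bounded C hereditary small
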